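/- arXiv:2207.10136 — 7 statements merged into one kernel-verified Lean document; each statement's English description precedes it below -/
import Mathlib

section
/- Let (e_n) be a basis of an infinite-dimensional separable Banach space X. The following are equivalent: (i) (e_n) is almost greedy, i.e., there is C ≥ 1 such that ‖x − P_A(x)‖ ≤ C·σ̃_m(x) for all x ∈ X, all m ∈ ℕ, and all A ∈ G(x,m); (ii) there is C ≥ 1 such that ‖x − P_A(x)‖ ≤ C·σ̌_k(x) for all x ∈ X, all m ∈ ℕ, all A ∈ G(x,m), and all integers 0 ≤ k ≤ m; (iii) (e_n) is consecutive almost greedy, i.e., there is C ≥ 1 such that ‖x − P_A(x)‖ ≤ C·σ̌_m(x) for all x ∈ X, all m ∈ ℕ, and all A ∈ G(x,m). -/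
/-!
The implication from almost greedy to the middle property holds because `f n x → 0`: a set of
size `k ≤ m` can be enlarged to size `m` by a far away block on which the projection of `x` is
negligible (`sigmaTilde_le_of_card_le`).

The substance is that consecutive almost greediness implies almost greediness
(`consecutive_bound`). Let `A` be a greedy set of `x`, `|B| = |A|`, `y = x - P_B x`, and let `t`
separate the coefficients of `x` on `A` from those off `A`. Then
`x - P_A x = (y - P_{A \ B} y) + P_{B \ A} x`, where `A \ B` is a greedy set of `y`. Three
applications of the hypothesis are used, with `E` a block of `|A \ B|` consecutive integers far to
the right, on which `y` is negligible.

* Comparing with far away intervals gives quasi-greediness: `‖y - P_{A \ B} y‖ ≤ C ‖y‖`.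
* Replacing `y` on `E` by `t 1_E` and comparing the greedy set `A \ B` with the interval `E` gives
  `‖t 1_E‖ ≲ ‖y‖`.
* For an interval `I ⊇ B \ A` to the left of `E`, fill the gaps: the vector
  `P_{B \ A} x + t 1_{I \ (B \ A)} + t 1_E` has the greedy set `(I \ (B \ A)) ∪ E`, of size `|I|`.
  Comparing it with `I` gives `‖P_{B \ A} x‖ ≤ C ‖t 1_E‖`.
-/

open Finset

noncomputable section

variable {𝕜 : Type*} [RCLike 𝕜] {X : Type*} [NormedAddCommGroup X] [NormedSpace 𝕜 X]

/-- The coordinate projection `P_A x = ∑_{n ∈ A} e_n^*(x) • e_n`. -/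
def gproj (e : ℕ → X) (f : ℕ → X →L[𝕜] 𝕜) (A : Finset ℕ) (x : X) : X :=
  ∑ n ∈ A, f n x • e n

/-- `A` is a greedy set of `x` of order `m` (with respect to the functionals `f`):
`|A| = m` and `min_{n ∈ A} |e_n^*(x)| ≥ sup_{n ∉ A} |e_n^*(x)|`. -/
def IsGreedySet (f : ℕ → X →L[𝕜] 𝕜) (x : X) (m : ℕ) (A : Finset ℕ) : Prop :=
  A.card = m ∧ ∀ a ∈ A, ∀ b ∉ A, ‖f b x‖ ≤ ‖f a x‖

/-- A semi-normalized basis of `X` together with its biorthogonal functionals: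
the linear span of `(e_n)` is dense, `f_j (e_k) = δ_{jk}`, and both sequences are
semi-normalized. -/
structure SNBasis (e : ℕ → X) (f : ℕ → X →L[𝕜] 𝕜) : Prop where
  dense_span : Dense (Submodule.span 𝕜 (Set.range e) : Set X)
  biorth : ∀ j k, f j (e k) = if j = k then 1 else 0
  semi_normalized : ∃ c₁ c₂ : ℝ, 0 < c₁ ∧
    ∀ n, c₁ ≤ ‖e n‖ ∧ c₁ ≤ ‖f n‖ ∧ ‖e n‖ ≤ c₂ ∧ ‖f n‖ ≤ c₂

/-- `σ̃_m(x) = inf {‖x - P_A x‖ : A ⊆ ℕ finite, |A| = m}`. -/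
def sigmaTilde (e : ℕ → X) (f : ℕ → X →L[𝕜] 𝕜) (m : ℕ) (x : X) : ℝ :=
  sInf {r | ∃ A : Finset ℕ, A.card = m ∧ r = ‖x - gproj e f A x‖}

/-- `σ̌_m(x) = inf {‖x - P_I x‖ : I an interval of consecutive integers, |I| = m}`. -/
def sigmaCheck (e : ℕ → X) (f : ℕ → X →L[𝕜] 𝕜) (m : ℕ) (x : X) : ℝ :=
  sInf {r | ∃ a : ℕ, r = ‖x - gproj e f (Finset.Ico a (a + m)) x‖}

/-! ### Coordinate projections and the error functionals -/

section Projections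

variable {e : ℕ → X} {f : ℕ → X →L[𝕜] 𝕜}

/-- The vector `t 1_E = ∑_{n ∈ E} t e_n`. -/
def cvec (𝕜 : Type*) [RCLike 𝕜] {X : Type*} [NormedAddCommGroup X] [NormedSpace 𝕜 X]
    (e : ℕ → X) (E : Finset ℕ) (t : ℝ) : X :=
  ∑ n ∈ E, (t : 𝕜) • e n

lemma coord_gproj (hb : SNBasis e f) (A : Finset ℕ) (x : X) (j : ℕ) :
    f j (gproj e f A x) = if j ∈ A then f j x else 0 := by
  simp [gproj, map_sum, hb.biorth]

lemma coord_cvec (hb : SNBasis e f) (E : Finset ℕ) (t : ℝ) (j : ℕ) :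
    f j (cvec 𝕜 e E t) = if j ∈ E then (t : 𝕜) else 0 := by
  simp [cvec, map_sum, hb.biorth]

lemma gproj_congr {A : Finset ℕ} {x y : X} (h : ∀ n ∈ A, f n x = f n y) :
    gproj e f A x = gproj e f A y :=
  Finset.sum_congr rfl fun n hn => by rw [h n hn]

lemma gproj_union {A B : Finset ℕ} (h : Disjoint A B) (x : X) :
    gproj e f (A ∪ B) x = gproj e f A x + gproj e f B x :=
  Finset.sum_union h

lemma gproj_eq_cvec {E : Finset ℕ} {t : ℝ} {x : X} (h : ∀ n ∈ E, f n x = (t : 𝕜)) :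
    gproj e f E x = cvec 𝕜 e E t :=
  Finset.sum_congr rfl fun n hn => by rw [h n hn]

lemma coord_tendsto_zero (hb : SNBasis e f) (x : X) :
    Filter.Tendsto (fun n => f n x) Filter.atTop (nhds 0) := by
  obtain ⟨c₁, c₂, hc₁, hc⟩ := hb.semi_normalized
  have hc₂ : 0 < c₂ := hc₁.trans_le ((hc 0).1.trans (hc 0).2.2.1)
  have hspan : ∀ s ∈ Submodule.span 𝕜 (Set.range e), ∀ᶠ n in Filter.atTop, f n s = 0 := by
    intro s hs
    induction hs using Submodule.span_induction with
    | mem x hx =>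
      obtain ⟨k, rfl⟩ := hx
      filter_upwards [Filter.eventually_gt_atTop k] with n hn
      rw [hb.biorth, if_neg hn.ne']
    | zero => simp
    | add x y _ _ hx hy =>
      filter_upwards [hx, hy] with n h1 h2
      simp [h1, h2]
    | smul a x _ hx =>
      filter_upwards [hx] with n h1
      simp [h1]
  rw [Metric.tendsto_nhds]
  intro ε hε
  obtain ⟨s, hs, hxs⟩ := Metric.dense_iff.1 hb.dense_span x (ε / c₂) (by positivity)
  filter_upwards [hspan s hxs] with n hn
  rw [dist_zero_right]
  have h1 : f n x = f n (x - s) := by rw [map_sub, hn, sub_zero]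
  have h2 : ‖x - s‖ < ε / c₂ := by
    rw [← dist_eq_norm, dist_comm]; exact hs
  calc ‖f n x‖ = ‖f n (x - s)‖ := by rw [h1]
    _ ≤ ‖f n‖ * ‖x - s‖ := (f n).le_opNorm _
    _ ≤ c₂ * ‖x - s‖ := by gcongr; exact (hc n).2.2.2
    _ < c₂ * (ε / c₂) := by gcongr
    _ = ε := by field_simp

lemma gproj_block_tendsto (hb : SNBasis e f) (x : X) (m : ℕ) :
    Filter.Tendsto (fun N => gproj e f (Finset.Ico N (N + m)) x) Filter.atTop (nhds 0) := by
  obtain ⟨c₁, c₂, hc₁, hc⟩ := hb.semi_normalized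
  have hsum : ∀ N, gproj e f (Finset.Ico N (N + m)) x
      = ∑ i ∈ Finset.range m, f (N + i) x • e (N + i) := by
    intro N
    simp [gproj, Finset.sum_Ico_eq_sum_range]
  simp only [hsum]
  rw [show (0 : X) = ∑ i ∈ Finset.range m, (0 : X) by simp]
  refine tendsto_finsetSum _ fun i _ => ?_
  have h1 : Filter.Tendsto (fun n => f n x • e n) Filter.atTop (nhds 0) := by
    refine squeeze_zero_norm (a := fun n => ‖f n x‖ * c₂) (fun n => ?_) ?_
    · rw [norm_smul]
      gcongr
      exact (hc n).2.2.1
    · simpa using (coord_tendsto_zero hb x).norm.mul_const c₂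
  exact h1.comp (Filter.tendsto_add_atTop_nat i)

lemma exists_block (hb : SNBasis e f) (x : X) (m N₀ : ℕ) {ε : ℝ} (hε : 0 < ε) :
    ∃ N, N₀ ≤ N ∧ ‖gproj e f (Finset.Ico N (N + m)) x‖ ≤ ε := by
  have h := (Metric.tendsto_nhds.1 (gproj_block_tendsto hb x m) ε hε).and
    (Filter.eventually_ge_atTop N₀)
  obtain ⟨N, h1, h2⟩ := h.exists
  exact ⟨N, h2, by simpa using h1.le⟩

lemma exists_bound (A : Finset ℕ) : ∃ N, ∀ a ∈ A, a < N :=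
  ⟨A.sup id + 1, fun _ ha => Nat.lt_succ_of_le (Finset.le_sup (f := id) ha)⟩

lemma sigmaTilde_le (A : Finset ℕ) (x : X) :
    sigmaTilde e f A.card x ≤ ‖x - gproj e f A x‖ :=
  csInf_le ⟨0, by rintro _ ⟨A, _, rfl⟩; exact norm_nonneg _⟩ ⟨A, rfl, rfl⟩

lemma sigmaCheck_le (m a : ℕ) (x : X) :
    sigmaCheck e f m x ≤ ‖x - gproj e f (Finset.Ico a (a + m)) x‖ :=
  csInf_le ⟨0, by rintro _ ⟨A, rfl⟩; exact norm_nonneg _⟩ ⟨a, rfl⟩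

lemma le_mul_sigmaTilde {C r : ℝ} (hC : 1 ≤ C) {m : ℕ} {x : X}
    (h : ∀ A : Finset ℕ, A.card = m → r ≤ C * ‖x - gproj e f A x‖) :
    r ≤ C * sigmaTilde e f m x := by
  have hC0 : 0 < C := by linarith
  rw [← div_le_iff₀' hC0]
  refine le_csInf ⟨_, Finset.range m, by simp, rfl⟩ ?_
  rintro _ ⟨A, hA, rfl⟩
  rw [div_le_iff₀' hC0]
  exact h A hA

lemma le_mul_sigmaCheck {C r : ℝ} (hC : 1 ≤ C) {m : ℕ} {x : X}
    (h : ∀ a : ℕ, r ≤ C * ‖x - gproj e f (Finset.Ico a (a + m)) x‖) :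
    r ≤ C * sigmaCheck e f m x := by
  have hC0 : 0 < C := by linarith
  rw [← div_le_iff₀' hC0]
  refine le_csInf ⟨_, 0, rfl⟩ ?_
  rintro _ ⟨a, rfl⟩
  rw [div_le_iff₀' hC0]
  exact h a

/-- `σ̃_m x ≤ ‖x - P_B x‖` also for smaller sets `B`, since `B` can be completed by a far away
block. -/
lemma sigmaTilde_le_of_card_le (hb : SNBasis e f) (x : X) (m : ℕ) (B : Finset ℕ) (hB : B.card ≤ m) :
    sigmaTilde e f m x ≤ ‖x - gproj e f B x‖ := by
  refine le_of_forall_pos_le_add fun ε hε => ?_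
  obtain ⟨N₀, hN₀⟩ := exists_bound B
  obtain ⟨N, hN, hE⟩ := exists_block hb x (m - B.card) N₀ hε
  have hd : Disjoint B (Finset.Ico N (N + (m - B.card))) := by
    rw [Finset.disjoint_left]
    intro a ha h
    have := hN₀ a ha
    have := (Finset.mem_Ico.1 h).1
    omega
  have hcard : (B ∪ Finset.Ico N (N + (m - B.card))).card = m := by
    rw [Finset.card_union_of_disjoint hd, Nat.card_Ico]
    omega
  have h1 := sigmaTilde_le (e := e) (f := f) (B ∪ Finset.Ico N (N + (m - B.card))) x
  rw [hcard, gproj_union hd, ← sub_sub] at h1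
  have h2 := norm_sub_le (x - gproj e f B x) (gproj e f (Finset.Ico N (N + (m - B.card))) x)
  linarith

/-- A threshold separating the coefficients on a greedy set from those off it. -/
lemma exists_threshold (hb : SNBasis e f) {x : X} {m : ℕ} {A : Finset ℕ}
    (hA : IsGreedySet f x m A) :
    ∃ t : ℝ, 0 ≤ t ∧ (∀ a ∈ A, t ≤ ‖f a x‖) ∧ ∀ b ∉ A, ‖f b x‖ ≤ t := by
  rcases A.eq_empty_or_nonempty with rfl | hne
  · obtain ⟨c₁, c₂, hc₁, hc⟩ := hb.semi_normalized
    have hc₂ : 0 < c₂ := hc₁.trans_le ((hc 0).1.trans (hc 0).2.2.1)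
    refine ⟨c₂ * ‖x‖, by positivity, by simp, fun b _ => ?_⟩
    exact ((f b).le_opNorm x).trans (by gcongr; exact (hc b).2.2.2)
  · obtain ⟨a, ha, hmin⟩ := A.exists_min_image (fun n => ‖f n x‖) hne
    exact ⟨‖f a x‖, norm_nonneg _, hmin, fun b hb' => hA.2 a ha b hb'⟩

end Projections

/-! ### Consequences of consecutive almost greediness -/

section Consecutive

variable {e : ℕ → X} {f : ℕ → X →L[𝕜] 𝕜}

/-- Consecutive almost greediness with constant `C`, the infimum over intervals being unfolded. -/
def ConsecutiveAG (e : ℕ → X) (f : ℕ → X →L[𝕜] 𝕜) (C : ℝ) : Prop :=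
  ∀ (x : X) (m : ℕ) (A : Finset ℕ), IsGreedySet f x m A → ∀ a : ℕ,
    ‖x - gproj e f A x‖ ≤ C * ‖x - gproj e f (Finset.Ico a (a + m)) x‖

/-- Quasi-greediness: intervals escaping to infinity remove nothing in the limit. -/
lemma quasi_greedy (hb : SNBasis e f) {C : ℝ} (H : ConsecutiveAG e f C) {x : X} {m : ℕ}
    {A : Finset ℕ} (hA : IsGreedySet f x m A) : ‖x - gproj e f A x‖ ≤ C * ‖x‖ := by
  have h : Filter.Tendsto
      (fun a => C * ‖x - gproj e f (Finset.Ico a (a + m)) x‖) Filter.atTop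
      (nhds (C * ‖x - 0‖)) :=
    ((tendsto_const_nhds.sub (gproj_block_tendsto hb x m)).norm).const_mul C
  rw [sub_zero] at h
  exact ge_of_tendsto' h fun a => H x m A hA a

/-- Gap filling: a vector supported on `F` with coefficients bounded by `t` is dominated by
`t 1_E` for any `E` to the right of `F` with `|E| = |F|`. -/
lemma gproj_le_cvec (hb : SNBasis e f) {C : ℝ} (H : ConsecutiveAG e f C) {x : X} {t : ℝ}
    (ht : 0 ≤ t) {F E : Finset ℕ} {N : ℕ} (hF : ∀ n ∈ F, n < N) (hE : ∀ n ∈ E, N ≤ n)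
    (hcard : F.card = E.card) (hx : ∀ n ∈ F, ‖f n x‖ ≤ t) :
    ‖gproj e f F x‖ ≤ C * ‖cvec 𝕜 e E t‖ := by
  set I := Finset.Ico 0 (0 + N) with hI
  have hFI : F ⊆ I := fun n hn => by have := hF n hn; simp [hI, this]
  have hd : Disjoint (I \ F) E := by
    rw [Finset.disjoint_left]
    intro n h1 h2
    have := hE n h2
    simp [hI] at h1
    omega
  have hIE : ∀ n ∈ I, n ∉ E := fun n h1 h2 => by
    have := hE n h2
    simp [hI] at h1
    omega
  set v := gproj e f F x + cvec 𝕜 e ((I \ F) ∪ E) t with hv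
  have hco : ∀ j, f j v = (if j ∈ F then f j x else 0)
      + (if j ∈ (I \ F) ∪ E then (t : 𝕜) else 0) := fun j => by
    rw [hv, map_add, coord_gproj hb, coord_cvec hb]
  have hoff : ∀ n ∈ (I \ F) ∪ E, n ∉ F := by
    intro n hn hnF
    rcases Finset.mem_union.1 hn with h | h
    · exact (Finset.mem_sdiff.1 h).2 hnF
    · exact hIE n (hFI hnF) h
  have hon : ∀ n ∈ (I \ F) ∪ E, f n v = (t : 𝕜) := fun n hn => by
    rw [hco, if_neg (hoff n hn), if_pos hn, zero_add]
  have hgreedy : IsGreedySet f v N ((I \ F) ∪ E) := by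
    constructor
    · have h1 := Finset.card_le_card hFI
      rw [Finset.card_union_of_disjoint hd, Finset.card_sdiff_of_subset hFI]
      have h2 : I.card = N := by simp [hI]
      omega
    · intro a ha b hb'
      rw [hon a ha, hco, if_neg hb', add_zero, RCLike.norm_ofReal, abs_of_nonneg ht]
      split_ifs with h
      · exact hx b h
      · simpa using ht
  have h1 : gproj e f ((I \ F) ∪ E) v = cvec 𝕜 e ((I \ F) ∪ E) t := gproj_eq_cvec hon
  have hadd : cvec 𝕜 e ((I \ F) ∪ E) t = cvec 𝕜 e (I \ F) t + cvec 𝕜 e E t :=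
    Finset.sum_union hd
  have h2 : gproj e f I v = cvec 𝕜 e (I \ F) t + gproj e f F x := by
    rw [← Finset.sdiff_union_of_subset hFI, gproj_union Finset.sdiff_disjoint]
    congr 1
    · rw [Finset.sdiff_union_of_subset hFI]
      exact gproj_eq_cvec fun n hn => hon n (Finset.mem_union_left _ hn)
    · refine gproj_congr fun n hn => ?_
      rw [hco, if_pos hn, if_neg fun h => hoff n h hn, add_zero]
  have h3 := H v N _ hgreedy 0
  rw [← hI, h1, h2, hadd, hv, hadd] at h3
  convert h3 using 2
  · abel
  · congr 1; abel

/-- A greedy set `G` of `y` of size `n`, with coefficients at least `t` on `G`, forces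
`t ‖1_E‖ ≲ ‖y‖` on an interval `E` of length `n`, up to the size of `P_E y`. -/
lemma cvec_le (hb : SNBasis e f) {C : ℝ} (hC : 1 ≤ C) (H : ConsecutiveAG e f C) {y : X}
    {t ε : ℝ} (ht : 0 ≤ t) {n N : ℕ} {G : Finset ℕ} (hG : IsGreedySet f y n G)
    (hGN : ∀ a ∈ G, a < N) (hGt : ∀ a ∈ G, t ≤ ‖f a y‖)
    (hε : ‖gproj e f (Finset.Ico N (N + n)) y‖ ≤ ε) :
    ‖cvec 𝕜 e (Finset.Ico N (N + n)) t‖ ≤ 2 * C * ‖y‖ + (C + 1) * ε := by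
  set E := Finset.Ico N (N + n) with hE
  set w := y - gproj e f E y + cvec 𝕜 e E t with hw
  have hon : ∀ j ∈ E, f j w = (t : 𝕜) := fun j hj => by
    rw [hw, map_add, map_sub, coord_gproj hb, coord_cvec hb, if_pos hj, if_pos hj, sub_self,
      zero_add]
  have hoff : ∀ j ∉ E, f j w = f j y := fun j hj => by
    rw [hw, map_add, map_sub, coord_gproj hb, coord_cvec hb, if_neg hj, if_neg hj, sub_zero,
      add_zero]
  have hGE : ∀ a ∈ G, a ∉ E := fun a ha h => by
    have := hGN a ha
    have := (Finset.mem_Ico.1 h).1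
    omega
  have hgreedy : IsGreedySet f w n G := by
    refine ⟨hG.1, fun a ha b hb' => ?_⟩
    rw [hoff a (hGE a ha)]
    by_cases h : b ∈ E
    · rw [hon b h, RCLike.norm_ofReal, abs_of_nonneg ht]
      exact hGt a ha
    · rw [hoff b h]
      exact hG.2 a ha b hb'
  have h1 := H w n G hgreedy N
  have h2 : gproj e f G w = gproj e f G y := gproj_congr fun a ha => hoff a (hGE a ha)
  have h3 : w - gproj e f E w = y - gproj e f E y := by
    rw [gproj_eq_cvec hon, hw, add_sub_cancel_right]
  rw [← hE, h2, h3] at h1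
  have h4 := quasi_greedy hb H hG
  have h5 : cvec 𝕜 e E t = (w - gproj e f G y) - (y - gproj e f G y) + gproj e f E y := by
    rw [hw]; abel
  have h6 : ‖cvec 𝕜 e E t‖ ≤ ‖w - gproj e f G y‖ + ‖y - gproj e f G y‖ + ‖gproj e f E y‖ := by
    rw [h5]
    exact (norm_add_le _ _).trans (by gcongr; exact norm_sub_le _ _)
  have h7 : C * ‖y - gproj e f E y‖ ≤ C * (‖y‖ + ε) := by
    gcongr
    exact (norm_sub_le _ _).trans (by gcongr)
  linarith

lemma consecutive_bound (hb : SNBasis e f) {C : ℝ} (hC : 1 ≤ C) (H : ConsecutiveAG e f C)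
    {x : X} {m : ℕ} {A : Finset ℕ} (hA : IsGreedySet f x m A) (B : Finset ℕ) (hB : B.card = m) :
    ‖x - gproj e f A x‖ ≤ (C + 2 * C ^ 2) * ‖x - gproj e f B x‖ := by
  obtain ⟨t, ht, htA, htB⟩ := exists_threshold hb hA
  set y := x - gproj e f B x with hy
  have hcard : (B \ A).card = (A \ B).card :=
    Finset.card_sdiff_comm (hB.trans hA.1.symm)
  have hyB : ∀ j ∈ B, f j y = 0 := fun j hj => by
    rw [hy, map_sub, coord_gproj hb, if_pos hj, sub_self]
  have hyoff : ∀ j ∉ B, f j y = f j x := fun j hj => by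
    rw [hy, map_sub, coord_gproj hb, if_neg hj, sub_zero]
  have hG : IsGreedySet f y (A \ B).card (A \ B) := by
    refine ⟨rfl, fun a ha b hb' => ?_⟩
    obtain ⟨haA, haB⟩ := Finset.mem_sdiff.1 ha
    by_cases h : b ∈ B
    · simp [hyB b h]
    · rw [hyoff a haB, hyoff b h]
      exact hA.2 a haA b fun hbA => hb' (Finset.mem_sdiff.2 ⟨hbA, h⟩)
  have hdecomp : x - gproj e f A x = (y - gproj e f (A \ B) y) + gproj e f (B \ A) x := by
    have h1 : gproj e f (A \ B) y = gproj e f (A \ B) x :=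
      gproj_congr fun n hn => hyoff n (Finset.mem_sdiff.1 hn).2
    have h2 : gproj e f B x + gproj e f (A \ B) x = gproj e f A x + gproj e f (B \ A) x := by
      rw [← gproj_union Finset.disjoint_sdiff, ← gproj_union Finset.disjoint_sdiff,
        Finset.union_sdiff_self_eq_union, Finset.union_sdiff_self_eq_union, Finset.union_comm]
    rw [h1, hy, sub_sub, h2]
    abel
  refine le_of_forall_pos_le_add fun δ hδ => ?_
  obtain ⟨N₀, hN₀⟩ := exists_bound (A ∪ B)
  have hCpos : 0 < C * (C + 1) := by nlinarith
  obtain ⟨N, hN, hε⟩ := exists_block hb y (A \ B).card N₀ (div_pos hδ hCpos)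
  have h1 := cvec_le hb hC H ht hG
    (fun a ha => (hN₀ a (Finset.mem_union_left _ (Finset.mem_sdiff.1 ha).1)).trans_le hN)
    (fun a ha => by
      rw [hyoff a (Finset.mem_sdiff.1 ha).2]
      exact htA a (Finset.mem_sdiff.1 ha).1) hε
  have h2 := gproj_le_cvec (x := x) (F := B \ A) hb H ht
    (E := Finset.Ico N (N + (A \ B).card)) (N := N)
    (fun a ha => (hN₀ a (Finset.mem_union_right _ (Finset.mem_sdiff.1 ha).1)).trans_le hN)
    (fun n hn => (Finset.mem_Ico.1 hn).1) (by simpa using hcard)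
    (fun n hn => htB n (Finset.mem_sdiff.1 hn).2)
  have h3 := quasi_greedy hb H hG
  have h4 := mul_le_mul_of_nonneg_left h1 (by linarith : (0 : ℝ) ≤ C)
  have h5 : C * ((C + 1) * (δ / (C * (C + 1)))) = δ := by
    rw [← mul_assoc]
    exact mul_div_cancel₀ δ hCpos.ne'
  rw [hdecomp]
  refine (norm_add_le _ _).trans ?_
  rw [mul_add, h5] at h4
  nlinarith

end Consecutive

/-- For a basis of an infinite-dimensional separable Banach space, the
almost greedy property, the intermediate property (ii), and the consecutive almost
greedy property are all equivalent. -/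
theorem stmt0 [CompleteSpace X] [TopologicalSpace.SeparableSpace X]
    (hinf : ¬FiniteDimensional 𝕜 X)
    (e : ℕ → X) (f : ℕ → X →L[𝕜] 𝕜) (hb : SNBasis e f) :
    ((∃ C : ℝ, 1 ≤ C ∧ ∀ (x : X) (m : ℕ) (A : Finset ℕ), IsGreedySet f x m A →
        ‖x - gproj e f A x‖ ≤ C * sigmaTilde e f m x) ↔
      (∃ C : ℝ, 1 ≤ C ∧ ∀ (x : X) (m : ℕ) (A : Finset ℕ), IsGreedySet f x m A →
        ∀ k ≤ m, ‖x - gproj e f A x‖ ≤ C * sigmaCheck e f k x))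
    ∧
    ((∃ C : ℝ, 1 ≤ C ∧ ∀ (x : X) (m : ℕ) (A : Finset ℕ), IsGreedySet f x m A →
        ∀ k ≤ m, ‖x - gproj e f A x‖ ≤ C * sigmaCheck e f k x) ↔
      (∃ C : ℝ, 1 ≤ C ∧ ∀ (x : X) (m : ℕ) (A : Finset ℕ), IsGreedySet f x m A →
        ‖x - gproj e f A x‖ ≤ C * sigmaCheck e f m x)) := by
  have h12 : (∃ C : ℝ, 1 ≤ C ∧ ∀ (x : X) (m : ℕ) (A : Finset ℕ), IsGreedySet f x m A →
        ‖x - gproj e f A x‖ ≤ C * sigmaTilde e f m x) →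
      (∃ C : ℝ, 1 ≤ C ∧ ∀ (x : X) (m : ℕ) (A : Finset ℕ), IsGreedySet f x m A →
        ∀ k ≤ m, ‖x - gproj e f A x‖ ≤ C * sigmaCheck e f k x) := by
    rintro ⟨C, hC, h⟩
    refine ⟨C, hC, fun x m A hA k hk => le_mul_sigmaCheck hC fun a => (h x m A hA).trans ?_⟩
    gcongr
    exact sigmaTilde_le_of_card_le hb x m _ (by simpa using hk)
  have h23 : (∃ C : ℝ, 1 ≤ C ∧ ∀ (x : X) (m : ℕ) (A : Finset ℕ), IsGreedySet f x m A →
        ∀ k ≤ m, ‖x - gproj e f A x‖ ≤ C * sigmaCheck e f k x) →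
      (∃ C : ℝ, 1 ≤ C ∧ ∀ (x : X) (m : ℕ) (A : Finset ℕ), IsGreedySet f x m A →
        ‖x - gproj e f A x‖ ≤ C * sigmaCheck e f m x) := by
    rintro ⟨C, hC, h⟩
    exact ⟨C, hC, fun x m A hA => h x m A hA m le_rfl⟩
  have h31 : (∃ C : ℝ, 1 ≤ C ∧ ∀ (x : X) (m : ℕ) (A : Finset ℕ), IsGreedySet f x m A →
        ‖x - gproj e f A x‖ ≤ C * sigmaCheck e f m x) →
      (∃ C : ℝ, 1 ≤ C ∧ ∀ (x : X) (m : ℕ) (A : Finset ℕ), IsGreedySet f x m A →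
        ‖x - gproj e f A x‖ ≤ C * sigmaTilde e f m x) := by
    rintro ⟨C, hC, h⟩
    have H : ConsecutiveAG e f C := fun x m A hA a => by
      refine (h x m A hA).trans ?_
      gcongr
      exact sigmaCheck_le m a x
    have hC' : 1 ≤ C + 2 * C ^ 2 := by nlinarith
    exact ⟨_, hC', fun x m A hA => le_mul_sigmaTilde hC' fun B hB =>
      consecutive_bound hb hC H hA B hB⟩
  exact ⟨⟨h12, fun h => h31 (h23 h)⟩, ⟨h23, fun h => h12 (h31 h)⟩⟩
end
end

section
/- If a basis (e_n) of an infinite-dimensional separable Banach space X is 1-consecutive almost greedy, i.e., ‖x − P_A(x)‖ ≤ σ̌_m(x) for all x ∈ X, all m ∈ ℕ, and all A ∈ G(x,m), then it is 1-almost greedy, i.e., ‖x − P_A(x)‖ ≤ σ̃_m(x) for all x ∈ X, all m ∈ ℕ, and all A ∈ G(x,m). -/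
/-!
Intervals of length one are arbitrary singletons, so the hypothesis at order one already says that
deleting a largest coefficient of a vector leaves a norm at most that of deleting any other one
(`norm_sub_le_of_isMax`). Now let `A` be greedy for `x`, let `|B| = |A|` and `B ≠ A`, and choose
`a ∈ A \ B` with `|f a x|` maximal and any `b ∈ B \ A`. In `w = x - P_{B \ {b}} x` the coefficient at
`a` is a largest one, and deleting the coefficient at `a` or at `b` from `w` gives `x - P_{B'} x`
with `B' = (B \ {b}) ∪ {a}`, or `x - P_B x`. Hence `‖x - P_{B'} x‖ ≤ ‖x - P_B x‖` where `A \ B'` is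
smaller than `A \ B`, and iterating this exchange turns `B` into `A`.
-/

open Finset

noncomputable section

variable {𝕜 : Type*} [RCLike 𝕜] {X : Type*} [NormedAddCommGroup X] [NormedSpace 𝕜 X]

lemma coeff_gproj {e : ℕ → X} {f : ℕ → X →L[𝕜] 𝕜} (hb : SNBasis e f) (S : Finset ℕ) (x : X)
    (c : ℕ) : f c (gproj e f S x) = if c ∈ S then f c x else 0 := by
  simp [gproj, map_sum, hb.biorth]

/-- The order-one case of the hypothesis, with the interval `{k}`. -/
lemma norm_sub_le_of_isMax {e : ℕ → X} {f : ℕ → X →L[𝕜] 𝕜}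
    (hcag : ∀ (x : X) (m : ℕ) (A : Finset ℕ), IsGreedySet f x m A →
      ‖x - gproj e f A x‖ ≤ sigmaCheck e f m x)
    (w : X) (j k : ℕ) (hj : ∀ c, ‖f c w‖ ≤ ‖f j w‖) :
    ‖w - f j w • e j‖ ≤ ‖w - f k w • e k‖ := by
  have h := hcag w 1 {j} ⟨by simp, fun a ha c _ => by
    rw [Finset.mem_singleton.1 ha]; exact hj c⟩
  have h2 : sigmaCheck e f 1 w ≤ ‖w - gproj e f (Finset.Ico k (k + 1)) w‖ :=
    csInf_le ⟨0, by rintro r ⟨a, rfl⟩; exact norm_nonneg _⟩ ⟨k, rfl⟩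
  simpa [gproj] using h.trans h2

lemma sub_gproj_insert {e : ℕ → X} {f : ℕ → X →L[𝕜] 𝕜} (hb : SNBasis e f) (S : Finset ℕ) (x : X)
    (c : ℕ) (hc : c ∉ S) :
    (x - gproj e f S x) - f c (x - gproj e f S x) • e c = x - gproj e f (insert c S) x := by
  rw [map_sub, coeff_gproj hb, if_neg hc, sub_zero]
  simp only [gproj, Finset.sum_insert hc]
  abel

/-- The exchange argument, by induction on `|A \ B|`. -/
lemma norm_sub_gproj_le {e : ℕ → X} {f : ℕ → X →L[𝕜] 𝕜} (hb : SNBasis e f)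
    (hcag : ∀ (x : X) (m : ℕ) (A : Finset ℕ), IsGreedySet f x m A →
      ‖x - gproj e f A x‖ ≤ sigmaCheck e f m x)
    (x : X) (A : Finset ℕ) (hA : ∀ a ∈ A, ∀ b ∉ A, ‖f b x‖ ≤ ‖f a x‖) (r : ℕ) :
    ∀ B : Finset ℕ, B.card = A.card → (A \ B).card = r →
      ‖x - gproj e f A x‖ ≤ ‖x - gproj e f B x‖ := by
  induction r with
  | zero =>
    intro B hBA hr
    have hsub : A ⊆ B := Finset.sdiff_eq_empty_iff_subset.1 (Finset.card_eq_zero.1 hr)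
    rw [Finset.eq_of_subset_of_card_le hsub hBA.le]
  | succ r ih =>
    intro B hBA hr
    obtain ⟨a, ha, hmax⟩ := (A \ B).exists_max_image (fun c => ‖f c x‖)
      (Finset.card_pos.1 (by omega))
    have hBne : (B \ A).Nonempty := by
      rw [← Finset.card_pos, Finset.card_sdiff_comm hBA]; omega
    obtain ⟨b, hbB⟩ := hBne
    rw [Finset.mem_sdiff] at ha hbB
    have hab : a ≠ b := fun h => hbB.2 (h ▸ ha.1)
    have haS : a ∉ B.erase b := fun h => ha.2 (Finset.mem_of_mem_erase h)
    have hbS : b ∉ B.erase b := Finset.notMem_erase b B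
    have key := norm_sub_le_of_isMax hcag (x - gproj e f (B.erase b) x) a b (by
      intro c
      simp only [map_sub, coeff_gproj hb, if_neg haS, sub_zero]
      split_ifs with hc
      · simp
      · rw [sub_zero]
        by_cases hcA : c ∈ A
        · refine hmax c (Finset.mem_sdiff.2 ⟨hcA, fun hcB => hc ?_⟩)
          exact Finset.mem_erase.2 ⟨fun h => hbB.2 (h ▸ hcA), hcB⟩
        · exact hA a ha.1 c hcA)
    rw [sub_gproj_insert hb _ _ _ haS, sub_gproj_insert hb _ _ _ hbS,
      Finset.insert_erase hbB.1] at key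
    refine le_trans (ih _ ?_ ?_) key
    · rw [Finset.card_insert_of_notMem haS, Finset.card_erase_add_one hbB.1, hBA]
    · have hset : A \ insert a (B.erase b) = (A \ B).erase a := by
        ext c
        simp only [Finset.mem_sdiff, Finset.mem_insert, Finset.mem_erase]
        have : c = b → c ∉ A := fun h => h ▸ hbB.2
        tauto
      rw [hset, Finset.card_erase_of_mem (Finset.mem_sdiff.2 ha), hr, Nat.add_sub_cancel]

/-- a 1-consecutive almost greedy basis of a Banach space is
1-almost greedy. -/
theorem stmt1 [CompleteSpace X] [TopologicalSpace.SeparableSpace X]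
    (hinf : ¬FiniteDimensional 𝕜 X)
    (e : ℕ → X) (f : ℕ → X →L[𝕜] 𝕜) (hb : SNBasis e f)
    (hcag : ∀ (x : X) (m : ℕ) (A : Finset ℕ), IsGreedySet f x m A →
      ‖x - gproj e f A x‖ ≤ sigmaCheck e f m x) :
    ∀ (x : X) (m : ℕ) (A : Finset ℕ), IsGreedySet f x m A →
      ‖x - gproj e f A x‖ ≤ sigmaTilde e f m x := by
  intro x m A hA
  refine le_csInf ⟨_, A, hA.1, rfl⟩ ?_
  rintro _ ⟨B, hB, rfl⟩
  exact norm_sub_gproj_le hb hcag x A hA.2 _ B (hB.trans hA.1.symm) rfl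
end
end

section
/- Let (e_n) be a Schauder basis of a Banach space X with basis constant K, i.e., ‖S_m(x)‖ ≤ K‖x‖ for all x ∈ X and m ∈ ℕ, where S_m(x) = Σ_{n=1}^m e_n^*(x) e_n. Then for every x ∈ X, every m ∈ ℕ, every A ⊆ {1,…,m}, and all scalars (a_n)_{n∈A}: ‖x − S_m(x)‖ ≤ (1 + K)·‖x − Σ_{n∈A} a_n e_n‖; hence ‖x − S_m(x)‖ ≤ (1 + K)·σ̂̂_m(x). Consequently, every partially greedy Schauder basis (one satisfying ‖x − G_m(x)‖ ≤ C‖x − S_m(x)‖ for all x, m, and greedy sums G_m(x)) is super-strong partially greedy, i.e., satisfies ‖x − G_m(x)‖ ≤ C(1 + K)·σ̂̂_m(x) for all x, m, and greedy sums G_m(x). -/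
/-!
The operator `I - S_m`, where `S_m = gproj e f (range m)`, annihilates every
`y = ∑ n ∈ A, a n • e n` with `A ⊆ range m`, because biorthogonality gives `S_m y = y`.
Hence `x - S_m x = (I - S_m) (x - y)`, whose norm is at most `(1 + K) * ‖x - y‖`. Taking the
infimum over `y`, and chaining with the partially greedy inequality, gives the other two claims.
The infimum step needs `1 + K > 0`, which holds since `K ≥ 0` as soon as some `e n` is nonzero.
-/

open Finset

noncomputable section

variable {𝕜 : Type*} [RCLike 𝕜] {X : Type*} [NormedAddCommGroup X] [NormedSpace 𝕜 X]

/-- `σ̂̂_m(x) = inf {‖x - ∑_{n ∈ A} a_n e_n‖ : A ⊆ {0, …, m-1}, scalars (a_n)}`. -/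
def sigmaHatHat (e : ℕ → X) (m : ℕ) (x : X) : ℝ :=
  sInf {r | ∃ A : Finset ℕ, A ⊆ Finset.range m ∧
    ∃ a : ℕ → 𝕜, r = ‖x - ∑ n ∈ A, a n • e n‖}

theorem gproj_sub (e : ℕ → X) (f : ℕ → X →L[𝕜] 𝕜) (A : Finset ℕ) (x y : X) :
    gproj e f A (x - y) = gproj e f A x - gproj e f A y := by
  simp [gproj, sub_smul]

theorem gproj_eq_self {e : ℕ → X} {f : ℕ → X →L[𝕜] 𝕜} (hb : SNBasis e f) {A B : Finset ℕ}
    (hAB : A ⊆ B) (a : ℕ → 𝕜) :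
    gproj e f B (∑ n ∈ A, a n • e n) = ∑ n ∈ A, a n • e n := by
  have hf : ∀ j, f j (∑ n ∈ A, a n • e n) = if j ∈ A then a j else 0 := by
    intro j
    simp [hb.biorth]
  simp only [gproj, hf, ite_smul, zero_smul]
  rw [← Finset.sum_filter, Finset.filter_mem_eq_inter, Finset.inter_eq_right.mpr hAB]

theorem basisConst_nonneg {e : ℕ → X} {f : ℕ → X →L[𝕜] 𝕜} (hb : SNBasis e f) {K : ℝ}
    (hK : ∀ (x : X) (m : ℕ), ‖gproj e f (Finset.range m) x‖ ≤ K * ‖x‖) : 0 ≤ K := by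
  obtain ⟨c₁, c₂, hc, h⟩ := hb.semi_normalized
  exact nonneg_of_mul_nonneg_left ((norm_nonneg _).trans (hK (e 0) 0)) (hc.trans_le (h 0).1)

theorem norm_sub_partialSum_le {e : ℕ → X} {f : ℕ → X →L[𝕜] 𝕜} (hb : SNBasis e f) {K : ℝ}
    (hK : ∀ (x : X) (m : ℕ), ‖gproj e f (Finset.range m) x‖ ≤ K * ‖x‖)
    (x : X) (m : ℕ) (A : Finset ℕ) (hA : A ⊆ Finset.range m) (a : ℕ → 𝕜) :
    ‖x - gproj e f (Finset.range m) x‖ ≤ (1 + K) * ‖x - ∑ n ∈ A, a n • e n‖ := by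
  set y := ∑ n ∈ A, a n • e n with hy
  have h : x - gproj e f (Finset.range m) x = (x - y) - gproj e f (Finset.range m) (x - y) := by
    rw [gproj_sub, hy, gproj_eq_self hb hA]
    abel
  rw [h]
  linarith [norm_sub_le (x - y) (gproj e f (Finset.range m) (x - y)), hK (x - y) m]

theorem norm_sub_partialSum_le_sigmaHatHat {e : ℕ → X} {f : ℕ → X →L[𝕜] 𝕜}
    (hb : SNBasis e f) {K : ℝ}
    (hK : ∀ (x : X) (m : ℕ), ‖gproj e f (Finset.range m) x‖ ≤ K * ‖x‖) (x : X) (m : ℕ) :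
    ‖x - gproj e f (Finset.range m) x‖ ≤ (1 + K) * sigmaHatHat (𝕜 := 𝕜) e m x := by
  have hK1 : 0 < 1 + K := by linarith [basisConst_nonneg hb hK]
  rw [← div_le_iff₀' hK1]
  refine le_csInf ⟨_, ∅, Finset.empty_subset _, 0, rfl⟩ ?_
  rintro r ⟨A, hA, a, rfl⟩
  rw [div_le_iff₀' hK1]
  exact norm_sub_partialSum_le hb hK x m A hA a

/-- for a Schauder basis with basis constant `K`, the `m`-th partial sum is a
near-best approximation among expansions supported in the first `m` indices; consequently
every partially greedy Schauder basis is super-strong partially greedy. -/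
theorem stmt7 [CompleteSpace X] [TopologicalSpace.SeparableSpace X]
    (hinf : ¬FiniteDimensional 𝕜 X)
    (e : ℕ → X) (f : ℕ → X →L[𝕜] 𝕜) (hb : SNBasis e f) (K : ℝ)
    (hK : ∀ (x : X) (m : ℕ), ‖gproj e f (Finset.range m) x‖ ≤ K * ‖x‖) :
    (∀ (x : X) (m : ℕ) (A : Finset ℕ), A ⊆ Finset.range m → ∀ a : ℕ → 𝕜,
      ‖x - gproj e f (Finset.range m) x‖ ≤ (1 + K) * ‖x - ∑ n ∈ A, a n • e n‖)
    ∧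
    (∀ (x : X) (m : ℕ),
      ‖x - gproj e f (Finset.range m) x‖ ≤ (1 + K) * sigmaHatHat (𝕜 := 𝕜) e m x)
    ∧
    (∀ C : ℝ, 0 < C →
      (∀ (x : X) (m : ℕ) (A : Finset ℕ), IsGreedySet f x m A →
        ‖x - gproj e f A x‖ ≤ C * ‖x - gproj e f (Finset.range m) x‖) →
      ∀ (x : X) (m : ℕ) (A : Finset ℕ), IsGreedySet f x m A →
        ‖x - gproj e f A x‖ ≤ C * (1 + K) * sigmaHatHat (𝕜 := 𝕜) e m x) := by
  refine ⟨norm_sub_partialSum_le hb hK, norm_sub_partialSum_le_sigmaHatHat hb hK, ?_⟩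
  intro C hC hpg x m A hA
  calc ‖x - gproj e f A x‖ ≤ C * ‖x - gproj e f (Finset.range m) x‖ := hpg x m A hA
    _ ≤ C * ((1 + K) * sigmaHatHat (𝕜 := 𝕜) e m x) :=
        mul_le_mul_of_nonneg_left (norm_sub_partialSum_le_sigmaHatHat hb hK x m) hC.le
    _ = C * (1 + K) * sigmaHatHat (𝕜 := 𝕜) e m x := by ring
end
end

section
/- Let (e_n) be a basis of an infinite-dimensional separable Banach space X and C ≥ 1. Then (e_n) is C-almost greedy (‖x − P_A(x)‖ ≤ C·σ̃_m(x) for all x ∈ X, m ∈ ℕ, A ∈ G(x,m)) if and only if for every bijection π of ℕ the reordered basis (e_{π(n)}) is C-consecutive almost greedy, i.e., ‖x − P_A(x)‖ ≤ C·σ̌_m[(e_{π(n)})](x) for all x ∈ X, m ∈ ℕ, and greedy sets A of x of order m (with respect to (e_{π(n)})), where σ̌_m[(e_{π(n)})](x) = inf{‖x − Σ_{n∈I} e_{π(n)}^*(x) e_{π(n)}‖ : I an interval of consecutive integers, |I| = m}. -/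
/-!
The condition on a reordering `π` is the condition on the original basis with finite sets
transported along `π`: `gproj_reorder` and `isGreedySet_reorder` say that a finite set `A` of new
indices plays the role of `A.map π`. Hence the functional `σ̌_m` of the reordered basis is an
infimum of `‖x - P_B x‖` over those `B` that are images of intervals under `π`, and it is bounded
below by `σ̃_m`. Conversely, any `B` with `|B| = m` is the image of `{0, …, m - 1}` under some
bijection of `ℕ` (`exists_perm_map_Ico`), so testing all `π` tests every competitor in `σ̃_m`.
-/

open Finset

noncomputable section

variable {𝕜 : Type*} [RCLike 𝕜] {X : Type*} [NormedAddCommGroup X] [NormedSpace 𝕜 X]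

/-- Projecting onto `A` in the reordered basis is projecting onto `π(A)` in the original one. -/
theorem gproj_reorder (e : ℕ → X) (f : ℕ → X →L[𝕜] 𝕜) (π : ℕ ≃ ℕ) (A : Finset ℕ) (x : X) :
    gproj (fun n => e (π n)) (fun n => f (π n)) A x = gproj e f (A.map π.toEmbedding) x := by
  simp [gproj, Finset.sum_map]

/-- Greedy sets of the reordered basis correspond, through `π`, to those of the original one. -/
theorem isGreedySet_reorder (f : ℕ → X →L[𝕜] 𝕜) (π : ℕ ≃ ℕ) (x : X) (m : ℕ) (A : Finset ℕ) :
    IsGreedySet (fun n => f (π n)) x m A ↔ IsGreedySet f x m (A.map π.toEmbedding) := by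
  unfold IsGreedySet
  rw [Finset.card_map]
  refine and_congr_right fun _ => ⟨fun h a ha b hb => ?_, fun h a ha b hb => ?_⟩
  · have := h (π.symm a) (by simpa [Finset.mem_map_equiv] using ha)
      (π.symm b) (by simpa [Finset.mem_map_equiv] using hb)
    simpa using this
  · exact h (π a) (by simpa [Finset.mem_map_equiv] using ha)
      (π b) (by simpa [Finset.mem_map_equiv] using hb)

theorem exists_perm_map_Ico (B : Finset ℕ) :
    ∃ π : ℕ ≃ ℕ, (Finset.Ico 0 (0 + B.card)).map π.toEmbedding = B :=
  Equiv.Perm.exists_map_finset_eq _ _ (by simp)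

theorem bddBelow_sigma_set (g : Finset ℕ → X) (p : Finset ℕ → Prop) :
    BddBelow {r : ℝ | ∃ A, p A ∧ r = ‖g A‖} :=
  ⟨0, by rintro _ ⟨A, -, rfl⟩; exact norm_nonneg _⟩

/-- a basis is `C`-almost greedy if and only if every reordering of it is
`C`-consecutive almost greedy. -/
theorem stmt8 [CompleteSpace X] [TopologicalSpace.SeparableSpace X]
    (hinf : ¬FiniteDimensional 𝕜 X)
    (e : ℕ → X) (f : ℕ → X →L[𝕜] 𝕜) (hb : SNBasis e f) (C : ℝ) (hC : 1 ≤ C) :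
    (∀ (x : X) (m : ℕ) (A : Finset ℕ), IsGreedySet f x m A →
      ‖x - gproj e f A x‖ ≤ C * sigmaTilde e f m x)
    ↔
    (∀ π : ℕ ≃ ℕ, ∀ (x : X) (m : ℕ) (A : Finset ℕ),
      IsGreedySet (fun n => f (π n)) x m A →
      ‖x - gproj (fun n => e (π n)) (fun n => f (π n)) A x‖ ≤
        C * sigmaCheck (fun n => e (π n)) (fun n => f (π n)) m x) := by
  have hC0 : 0 < C := by linarith
  constructor
  · intro h π x m A hA
    rw [gproj_reorder]
    refine (h x m _ ((isGreedySet_reorder f π x m A).1 hA)).trans ?_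
    refine mul_le_mul_of_nonneg_left ?_ hC0.le
    refine le_csInf ⟨_, 0, rfl⟩ ?_
    rintro _ ⟨a, rfl⟩
    rw [gproj_reorder]
    exact csInf_le (bddBelow_sigma_set (fun A => x - gproj e f A x) _) ⟨_, by simp, rfl⟩
  · intro h x m A hA
    rw [mul_comm, ← div_le_iff₀ hC0]
    refine le_csInf ⟨_, A, hA.1, rfl⟩ ?_
    rintro _ ⟨B, rfl, rfl⟩
    obtain ⟨π, hπ⟩ := exists_perm_map_Ico B
    have hA' : (A.map π.symm.toEmbedding).map π.toEmbedding = A := by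
      ext n; simp
    have hle := h π x B.card (A.map π.symm.toEmbedding)
      ((isGreedySet_reorder f π x _ _).2 (by rwa [hA']))
    rw [gproj_reorder, hA'] at hle
    rw [div_le_iff₀ hC0, mul_comm]
    refine hle.trans (mul_le_mul_of_nonneg_left ?_ hC0.le)
    -- `B` is the image of the interval starting at `0`, hence one of the competitors in `σ̌_m`.
    refine csInf_le ⟨0, by rintro _ ⟨a, rfl⟩; exact norm_nonneg _⟩ ⟨0, ?_⟩
    rw [gproj_reorder, hπ]
end
end

section
/- Let (e_n) be a C-consecutive almost greedy basis of an infinite-dimensional separable Banach space X, i.e., ‖x − P_A(x)‖ ≤ C·σ̌_m(x) for all x ∈ X, m ∈ ℕ, A ∈ G(x,m). Then (e_n) is C²-democratic: ‖1_A‖ ≤ C²‖1_B‖ for all finite sets A, B ⊆ ℕ with |A| ≤ |B|, where 1_A = Σ_{n∈A} e_n. -/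
/-!
Every comparison comes from one device. If `x = 1_S`, any `G ⊆ S` is a greedy set of `x`, so the
hypothesis gives `‖1_{S \ G}‖ ≤ C ‖1_{S \ J}‖` for every interval `J` with `|J| = |G|`
(`norm_indicator_sdiff_le`).

Given `|A| ≤ |B|`, choose `N` with `A, B ⊆ [0, N)` and put `I = [N, N + |A|)`.

* With `S = [0, N) ∪ I`, `G = S \ A` and `J = [0, N)`, which both have `N` elements, this reads
  `‖1_A‖ ≤ C ‖1_I‖`. Including the gaps of `A` in `x` lets a single interval remove `A`,
  however spread out `A` is.
* With `S = B ∪ I`, `G = B` and `J = [N, N + |B|) ⊇ I`, this reads `‖1_I‖ ≤ C ‖1_B‖`.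
-/

open Finset

noncomputable section

variable {𝕜 : Type*} [RCLike 𝕜] {X : Type*} [NormedAddCommGroup X] [NormedSpace 𝕜 X]

section

variable {e : ℕ → X} {f : ℕ → X →L[𝕜] 𝕜}

theorem coeff_indicator (hbi : ∀ j k, f j (e k) = if j = k then 1 else 0) (S : Finset ℕ) (j : ℕ) :
    f j (∑ n ∈ S, e n) = if j ∈ S then 1 else 0 := by
  simp [map_sum, hbi]

theorem indicator_sub_gproj (hbi : ∀ j k, f j (e k) = if j = k then 1 else 0) (S T : Finset ℕ) :
    (∑ n ∈ S, e n) - gproj e f T (∑ n ∈ S, e n) = ∑ n ∈ S \ T, e n := by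
  have h : gproj e f T (∑ n ∈ S, e n) = ∑ n ∈ S ∩ T, e n := by
    simp only [gproj, coeff_indicator hbi, ite_smul, one_smul, zero_smul]
    rw [← Finset.sum_filter, Finset.filter_mem_eq_inter, Finset.inter_comm]
  rw [h, sub_eq_iff_eq_add, ← Finset.sum_inter_add_sum_sdiff S T, add_comm]

/-- The greedy inequality for `x = 1_S`: all nonzero coefficients have modulus one, so every
`G ⊆ S` is a greedy set. -/
theorem norm_indicator_sdiff_le (hbi : ∀ j k, f j (e k) = if j = k then 1 else 0)
    {C : ℝ} (hC : 0 ≤ C)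
    (hcag : ∀ (x : X) (m : ℕ) (A : Finset ℕ), IsGreedySet f x m A →
      ‖x - gproj e f A x‖ ≤ C * sigmaCheck e f m x)
    {S G : Finset ℕ} (hG : G ⊆ S) (a : ℕ) :
    ‖∑ n ∈ S \ G, e n‖ ≤ C * ‖∑ n ∈ S \ Finset.Ico a (a + G.card), e n‖ := by
  have hgreedy : IsGreedySet f (∑ n ∈ S, e n) G.card G := by
    refine ⟨rfl, fun i hi j _ => ?_⟩
    rw [coeff_indicator hbi, coeff_indicator hbi, if_pos (hG hi)]
    split_ifs <;> simp
  have h := hcag _ _ _ hgreedy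
  rw [indicator_sub_gproj hbi] at h
  refine h.trans (mul_le_mul_of_nonneg_left ?_ hC)
  rw [← indicator_sub_gproj hbi]
  refine csInf_le ⟨0, ?_⟩ ⟨a, rfl⟩
  rintro r ⟨b, rfl⟩
  exact norm_nonneg _

end

/-- a `C`-consecutive almost greedy basis is `C²`-democratic. -/
theorem stmt11 [CompleteSpace X] [TopologicalSpace.SeparableSpace X]
    (hinf : ¬FiniteDimensional 𝕜 X)
    (e : ℕ → X) (f : ℕ → X →L[𝕜] 𝕜) (hb : SNBasis e f) (C : ℝ) (hC : 1 ≤ C)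
    (hcag : ∀ (x : X) (m : ℕ) (A : Finset ℕ), IsGreedySet f x m A →
      ‖x - gproj e f A x‖ ≤ C * sigmaCheck e f m x) :
    ∀ (A B : Finset ℕ), A.card ≤ B.card →
      ‖(∑ n ∈ A, e n : X)‖ ≤ C ^ 2 * ‖(∑ n ∈ B, e n : X)‖ := by
  intro A B hAB
  have hC0 : 0 ≤ C := zero_le_one.trans hC
  obtain ⟨N, hN⟩ : ∃ N, ∀ n ∈ A ∪ B, n < N :=
    ⟨(A ∪ B).sup id + 1, fun n hn => Nat.lt_succ_of_le (Finset.le_sup (f := id) hn)⟩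
  have hAN : ∀ n ∈ A, n < N := fun n hn => hN n (Finset.mem_union_left _ hn)
  have hBN : ∀ n ∈ B, n < N := fun n hn => hN n (Finset.mem_union_right _ hn)
  have h1 : ‖∑ n ∈ A, e n‖ ≤ C * ‖∑ n ∈ Finset.Ico N (N + A.card), e n‖ := by
    have hsub : A ⊆ Finset.Ico 0 (N + A.card) := fun n hn => by
      have := hAN n hn
      simp only [Finset.mem_Ico]
      omega
    have h := norm_indicator_sdiff_le hb.biorth hC0 hcag
      (S := Finset.Ico 0 (N + A.card)) (G := Finset.Ico 0 (N + A.card) \ A)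
      Finset.sdiff_subset 0
    have hcard : (Finset.Ico 0 (N + A.card) \ A).card = N := by
      rw [Finset.card_sdiff_of_subset hsub]
      simp
    have hrest : Finset.Ico 0 (N + A.card) \ Finset.Ico 0 (0 + N)
        = Finset.Ico N (N + A.card) := by
      ext n
      simp only [Finset.mem_sdiff, Finset.mem_Ico]
      omega
    rwa [hcard, Finset.sdiff_sdiff_eq_self hsub, hrest] at h
  have h2 : ‖∑ n ∈ Finset.Ico N (N + A.card), e n‖ ≤ C * ‖∑ n ∈ B, e n‖ := by
    have h := norm_indicator_sdiff_le hb.biorth hC0 hcag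
      (S := B ∪ Finset.Ico N (N + A.card)) (G := B) Finset.subset_union_left N
    have e1 : (B ∪ Finset.Ico N (N + A.card)) \ B = Finset.Ico N (N + A.card) := by
      ext n
      have := hBN n
      simp only [Finset.mem_sdiff, Finset.mem_union, Finset.mem_Ico]
      grind
    have e2 : (B ∪ Finset.Ico N (N + A.card)) \ Finset.Ico N (N + B.card) = B := by
      ext n
      have := hBN n
      simp only [Finset.mem_sdiff, Finset.mem_union, Finset.mem_Ico]
      grind
    rwa [e1, e2] at h
  calc ‖∑ n ∈ A, e n‖ ≤ C * ‖∑ n ∈ Finset.Ico N (N + A.card), e n‖ := h1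
    _ ≤ C * (C * ‖∑ n ∈ B, e n‖) := mul_le_mul_of_nonneg_left h2 hC0
    _ = C ^ 2 * ‖∑ n ∈ B, e n‖ := by ring
end
end

section
/- Let (e_n) be a 1-consecutive almost greedy basis of an infinite-dimensional separable Banach space X, i.e., ‖x − P_A(x)‖ ≤ σ̌_m(x) for all x ∈ X, m ∈ ℕ, A ∈ G(x,m). Then for every x ∈ X with max_n |e_n^*(x)| ≤ 1, all distinct indices k, j ∉ supp(x), and all scalars ε_k, ε_j of modulus 1: ‖x + ε_k e_k‖ ≤ ‖x + ε_j e_j‖. -/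
/-! Put `z = x + εk • e k + εj • e j`. All coefficients of `z` have modulus at most `1`, and the one
at `j` has modulus exactly `1`, so `{j}` is a greedy set of `z` of order one. A singleton is also
an interval, so comparing `{j}` with the interval `{k}` gives
`‖x + εk • e k‖ = ‖z - P_{j} z‖ ≤ ‖z - P_{k} z‖ = ‖x + εj • e j‖`. -/

open Finset

noncomputable section

variable {𝕜 : Type*} [RCLike 𝕜] {X : Type*} [NormedAddCommGroup X] [NormedSpace 𝕜 X]

/-- for a 1-consecutive almost greedy basis, adding a single signed basis
vector outside the support of a vector `x` with coefficients of modulus at most 1 always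
gives a norm bounded by that obtained from any other such index. -/
theorem stmt12 [CompleteSpace X] [TopologicalSpace.SeparableSpace X]
    (hinf : ¬FiniteDimensional 𝕜 X)
    (e : ℕ → X) (f : ℕ → X →L[𝕜] 𝕜) (hb : SNBasis e f)
    (hcag : ∀ (x : X) (m : ℕ) (A : Finset ℕ), IsGreedySet f x m A →
      ‖x - gproj e f A x‖ ≤ sigmaCheck e f m x) :
    ∀ (x : X), (∀ n, ‖f n x‖ ≤ 1) →
      ∀ (k j : ℕ), k ≠ j → f k x = 0 → f j x = 0 →
      ∀ (εk εj : 𝕜), ‖εk‖ = 1 → ‖εj‖ = 1 →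
        ‖x + εk • e k‖ ≤ ‖x + εj • e j‖ := by
  intro x hx k j hkj hk hj εk εj hεk hεj
  set z : X := x + εk • e k + εj • e j with hz
  have hf : ∀ n, f n z = f n x + (if n = k then εk else 0) + (if n = j then εj else 0) := by
    intro n
    simp [hz, hb.biorth]
  have hfk : f k z = εk := by simp [hf, hk, hkj]
  have hfj : f j z = εj := by simp [hf, hj, hkj.symm]
  have hgreedy : IsGreedySet f z 1 {j} := by
    refine ⟨by simp, ?_⟩
    intro a ha b hbj
    simp only [Finset.mem_singleton] at ha hbj
    subst ha
    rw [hfj, hεj]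
    by_cases hbk : b = k
    · rw [hbk, hfk, hεk]
    · simpa [hf, hbk, hbj] using hx b
  have hsigma : sigmaCheck e f 1 z ≤ ‖z - gproj e f {k} z‖ := by
    -- `sInf` on `ℝ` is a genuine lower bound only because the set of norms is bounded below.
    refine csInf_le ⟨0, ?_⟩ ⟨k, by simp⟩
    rintro r ⟨a, rfl⟩
    exact norm_nonneg _
  have hremj : z - gproj e f {j} z = x + εk • e k := by
    rw [gproj, Finset.sum_singleton, hfj, hz]
    abel
  have hremk : z - gproj e f {k} z = x + εj • e j := by
    rw [gproj, Finset.sum_singleton, hfk, hz]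
    abel
  rw [← hremj, ← hremk]
  exact (hcag z 1 {j} hgreedy).trans hsigma
end
end

section
/- Let (e_n) be a basis of an infinite-dimensional separable Banach space X, and suppose there is C > 0 such that for every x ∈ X and every m ∈ ℕ there exists A ∈ G(x,m) with ‖x − P_A(x)‖ ≤ C·inf{‖x − t·1_I‖ : t a scalar, I ⊆ ℕ an interval of consecutive integers (possibly empty) with |I ∩ supp(x)| ≤ m, and either every element of I is less than every element of A or every element of A is less than every element of I}. Then (e_n) is C-suppression quasi-greedy: ‖x − P_A(x)‖ ≤ C‖x‖ for all x ∈ X, all m ∈ ℕ, and all A ∈ G(x,m). -/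
/-!
Taking `t = 0` and the empty interval, the hypothesis provides, for all `x` and `m`, *some* greedy
set `A` of order `m` with `‖x - P_A x‖ ≤ C ‖x‖`. To reach an arbitrary greedy set `A` of `x`, add
`ε v` to `x`, where `v` is a vector supported on `A` whose coefficients are aligned with those of
`x`. This raises the modulus of every coefficient on `A` by `ε` and changes no other coefficient,
so `A` is the only greedy set of order `m` of `x + ε v`. It does not change `x - P_A x`, either,
because `P_A v = v`. Hence `‖x - P_A x‖ ≤ C ‖x + ε v‖` for all `ε > 0`, and `ε → 0` concludes.
-/

open Finset

noncomputable section

variable {𝕜 : Type*} [RCLike 𝕜] {X : Type*} [NormedAddCommGroup X] [NormedSpace 𝕜 X]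

lemma exists_aligned (z : 𝕜) :
    ∃ s : 𝕜, ∀ ε : ℝ, 0 < ε → ‖z + (ε : 𝕜) * s‖ = ‖z‖ + ε := by
  by_cases hz : z = 0
  · refine ⟨1, fun ε hε => ?_⟩
    simp [hz, abs_of_pos hε]
  · have hn : 0 < ‖z‖ := norm_pos_iff.2 hz
    refine ⟨z * ((‖z‖⁻¹ : ℝ) : 𝕜), fun ε hε => ?_⟩
    have : z + (ε : 𝕜) * (z * ((‖z‖⁻¹ : ℝ) : 𝕜)) = z * ((1 + ε * ‖z‖⁻¹ : ℝ) : 𝕜) := by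
      push_cast; ring
    rw [this, norm_mul, RCLike.norm_ofReal, abs_of_pos (by positivity)]
    field_simp

/-- A set of `m` indices carrying strictly larger coefficients than all the others is the only
greedy set of order `m`. -/
lemma IsGreedySet.eq_of_strict {f : ℕ → X →L[𝕜] 𝕜} {y : X} {m : ℕ} {A B : Finset ℕ}
    (hB : IsGreedySet f y m B) (hA : A.card = m)
    (hs : ∀ a ∈ A, ∀ b ∉ A, ‖f b y‖ < ‖f a y‖) : B = A := by
  refine Finset.eq_of_subset_of_card_le (fun b hbB => ?_) (by rw [hA, hB.1])
  by_contra hbA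
  obtain ⟨a, haA, haB⟩ : ∃ a ∈ A, a ∉ B := by
    by_contra! hAB
    exact hbA (Finset.eq_of_subset_of_card_le hAB (by rw [hA, hB.1]) ▸ hbB)
  exact absurd (hB.2 b hbB a haB) (not_le.2 (hs a haA b hbA))

open scoped Classical in
/-- the interval/one-dimensional approximation condition implies that the
basis is `C`-suppression quasi-greedy. -/
theorem stmt13 [CompleteSpace X] [TopologicalSpace.SeparableSpace X]
    (hinf : ¬FiniteDimensional 𝕜 X)
    (e : ℕ → X) (f : ℕ → X →L[𝕜] 𝕜) (hb : SNBasis e f) (C : ℝ) (hC : 0 < C)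
    (h : ∀ (x : X) (m : ℕ), ∃ A : Finset ℕ, IsGreedySet f x m A ∧
      ∀ (t : 𝕜) (a b : ℕ),
        ((Finset.Ico a b).filter fun n => f n x ≠ 0).card ≤ m →
        ((∀ i ∈ Finset.Ico a b, ∀ j ∈ A, i < j) ∨ (∀ j ∈ A, ∀ i ∈ Finset.Ico a b, j < i)) →
        ‖x - gproj e f A x‖ ≤ C * ‖x - t • ∑ n ∈ Finset.Ico a b, e n‖) :
    ∀ (x : X) (m : ℕ) (A : Finset ℕ), IsGreedySet f x m A →
      ‖x - gproj e f A x‖ ≤ C * ‖x‖ := by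
  intro x m A hA
  choose s hs using fun n => exists_aligned (f n x)
  set v : X := ∑ n ∈ A, s n • e n with hv
  have hfv : ∀ n, f n v = if n ∈ A then s n else 0 := by
    intro n
    simp [hv, map_sum, hb.biorth]
  have hPv : gproj e f A v = v := by
    unfold gproj
    rw [hv]
    exact Finset.sum_congr rfl fun n hn => by rw [← hv, hfv, if_pos hn]
  have key : ∀ ε : ℝ, 0 < ε → ‖x - gproj e f A x‖ ≤ C * ‖x + (ε : 𝕜) • v‖ := by
    intro ε hε
    obtain ⟨B, hB, hBC⟩ := h (x + (ε : 𝕜) • v) m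
    have hBA : B = A := by
      refine hB.eq_of_strict hA.1 fun a ha b hbA => ?_
      have h1 : f a (x + (ε : 𝕜) • v) = f a x + (ε : 𝕜) * s a := by simp [hfv, ha]
      have h2 : f b (x + (ε : 𝕜) • v) = f b x := by simp [hfv, hbA]
      rw [h1, h2, hs a ε hε]
      linarith [hA.2 a ha b hbA]
    subst hBA
    have hP : gproj e f B (x + (ε : 𝕜) • v) = gproj e f B x + (ε : 𝕜) • v := by
      rw [← hPv]
      simp only [gproj, Finset.smul_sum, ← Finset.sum_add_distrib]
      refine Finset.sum_congr rfl fun n hn => ?_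
      have : f n (∑ k ∈ B, f k v • e k) = f n v := congrArg (f n) hPv
      simp [-map_sum, map_add, map_smul, add_smul, mul_smul, Finset.smul_sum.symm, this]
    have := hBC 0 0 0 (by simp) (Or.inl (by simp))
    rwa [hP, add_sub_add_right_eq_sub, zero_smul, sub_zero] at this
  have hlim : Filter.Tendsto (fun ε : ℝ => C * ‖x + (ε : 𝕜) • v‖)
      (nhdsWithin 0 (Set.Ioi 0)) (nhds (C * ‖x‖)) := by
    have hc : Continuous fun ε : ℝ => C * ‖x + (ε : 𝕜) • v‖ := by fun_prop
    simpa using (hc.tendsto 0).mono_left nhdsWithin_le_nhds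
  exact ge_of_tendsto hlim (eventually_mem_nhdsWithin.mono fun ε hε => key ε hε)
end
end
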